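/- Let G and H be countable graphs of vertex degree bound d which are equivalent, meaning every rooted ball (of any radius) occurring in G occurs in H and vice versa. Then the graph Laplacians have equal operator norms of all polynomials: for every real polynomial P, ‖P(L_G)‖ = ‖P(L_H)‖, where L_G is the Laplacian on ℓ²(V(G)). Consequently Spec(L_G) = Spec(L_H). -/

import Mathlib

/-- The closed ball of radius `r` around `x` in the graph metric. -/
def gball {V : Type*} (G : SimpleGraph V) (x : V) (r : ℕ) : Set V :=
  {y | G.Reachable x y ∧ G.dist x y ≤ r}

/-- The rooted balls `B_r(G,x)` and `B_r(H,y)` are rooted-isomorphic. -/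
def BallIso {V W : Type*} (G : SimpleGraph V) (H : SimpleGraph W)
    (x : V) (y : W) (r : ℕ) : Prop :=
  ∃ e : gball G x r ≃ gball H y r,
    (∀ (hx : x ∈ gball G x r) (hy : y ∈ gball H y r), e ⟨x, hx⟩ = ⟨y, hy⟩) ∧
    ∀ a b : gball G x r, G.Adj a b ↔ H.Adj (e a) (e b)

/-- `G` and `H` are equivalent: the same isomorphism types of rooted balls occur in both. -/
def GraphEquiv {V W : Type*} (G : SimpleGraph V) (H : SimpleGraph W) : Prop :=
  (∀ (x : V) (r : ℕ), ∃ y : W, BallIso G H x y r) ∧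
  (∀ (y : W) (r : ℕ), ∃ x : V, BallIso G H x y r)

/-!
A polynomial `P(L)` in the Laplacian is local: the value of `P(L) f` at `v` depends only on the ball
of radius `deg P` around `v` and on the values of `f` there. A function supported in a ball of `G`
can therefore be moved to an isomorphic ball of `H` without changing its norm or that of its image
under `P(L)`, which bounds `P(L_G)` by `‖P(L_H)‖` on such functions. They are dense among the
functions supported in one connected component, and distinct components do not interact, so
`‖P(L_G)‖ ≤ ‖P(L_H)‖`, and conversely.

For the spectrum, if `U = λ - L_G` is invertible, then `‖1 - ε U⋆U‖ < 1` for some `ε > 0`. Since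
`L_G` is self-adjoint, `1 - ε U⋆U` is a polynomial in `L_G`; the same polynomial in `L_H` has norm
less than one, so `λ - L_H` is invertible by the Neumann series.
-/

open Set
open Polynomial (C X aeval)
open scoped ENNReal Polynomial lp

section Spectrum

variable {𝕜 E A : Type*} [RCLike 𝕜] [NormedAddCommGroup E] [InnerProductSpace 𝕜 E] [CompleteSpace E]

theorem norm_one_sub_smul_star_mul_self_apply_sq_le (U : E →L[𝕜] E) {ε : ℝ} (hε : 0 ≤ ε)
    (hεU : ε * ‖U‖ ^ 2 ≤ 1) (x : E) :
    ‖(1 - (ε : 𝕜) • (star U * U)) x‖ ^ 2 ≤ ‖x‖ ^ 2 - ε * ‖U x‖ ^ 2 := by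
  have h_inner : RCLike.re (inner 𝕜 x ((ε : 𝕜) • star U (U x))) = ε * ‖U x‖ ^ 2 := by
    rw [inner_smul_right, RCLike.re_ofReal_mul, ContinuousLinearMap.star_eq_adjoint,
      ContinuousLinearMap.adjoint_inner_right, inner_self_eq_norm_sq]
  have h_quad : ‖(ε : 𝕜) • star U (U x)‖ ^ 2 ≤ ε * ‖U x‖ ^ 2 := by
    calc ‖(ε : 𝕜) • star U (U x)‖ ^ 2 = ε ^ 2 * ‖star U (U x)‖ ^ 2 := by
          rw [norm_smul, mul_pow, RCLike.norm_ofReal, sq_abs]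
      _ ≤ ε ^ 2 * (‖U‖ * ‖U x‖) ^ 2 := by
          gcongr
          exact norm_star U ▸ (star U).le_opNorm (U x)
      _ = (ε * ‖U‖ ^ 2) * (ε * ‖U x‖ ^ 2) := by ring
      _ ≤ ε * ‖U x‖ ^ 2 := mul_le_of_le_one_left (by positivity) hεU
  have h_apply : (1 - (ε : 𝕜) • (star U * U)) x = x - (ε : 𝕜) • star U (U x) := rfl
  rw [h_apply, norm_sub_sq (𝕜 := 𝕜), h_inner]
  linarith

theorem exists_norm_one_sub_smul_star_mul_self_lt_one {U : E →L[𝕜] E} (hU : IsUnit U) :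
    ∃ ε : ℝ, 0 < ε ∧ ‖1 - (ε : 𝕜) • (star U * U)‖ < 1 := by
  obtain ⟨u, rfl⟩ := hU
  set U : E →L[𝕜] E := ↑u
  set N : ℝ := ‖(↑u⁻¹ : E →L[𝕜] E)‖ + 1
  have hN : 1 ≤ N := le_add_of_nonneg_left (norm_nonneg _)
  have h_below (x : E) : ‖x‖ ≤ N * ‖U x‖ := by
    calc ‖x‖ = ‖(↑u⁻¹ : E →L[𝕜] E) (U x)‖ := by
          rw [← mul_apply_eq_comp, Units.inv_mul, one_apply_eq_self]
      _ ≤ ‖(↑u⁻¹ : E →L[𝕜] E)‖ * ‖U x‖ := ContinuousLinearMap.le_opNorm _ _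
      _ ≤ N * ‖U x‖ := by gcongr; exact le_add_of_nonneg_right zero_le_one
  set ε : ℝ := (‖U‖ ^ 2 + 1)⁻¹
  have hε : 0 < ε := by positivity
  have hεU : ε * (‖U‖ ^ 2 + 1) = 1 := inv_mul_cancel₀ (by positivity)
  have hε_le : ε / N ^ 2 ≤ 1 := by
    rw [div_le_one (by positivity)]
    nlinarith [mul_nonneg hε.le (sq_nonneg ‖U‖)]
  refine ⟨ε, hε, lt_of_le_of_lt ?_ ((Real.sqrt_lt' one_pos (x := 1 - ε / N ^ 2)).2 ?_)⟩
  · refine ContinuousLinearMap.opNorm_le_bound _ (Real.sqrt_nonneg _) fun x ↦ ?_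
    refine le_of_sq_le_sq ?_ (by positivity)
    calc _ ≤ ‖x‖ ^ 2 - ε * ‖U x‖ ^ 2 :=
          norm_one_sub_smul_star_mul_self_apply_sq_le U hε.le (by linarith) x
      _ ≤ ‖x‖ ^ 2 - ε * (‖x‖ / N) ^ 2 := by
          gcongr
          exact (div_le_iff₀' (by positivity)).2 (h_below x)
      _ = (√(1 - ε / N ^ 2) * ‖x‖) ^ 2 := by
          rw [mul_pow, div_pow, Real.sq_sqrt (sub_nonneg.2 hε_le)]
          ring
  · rw [one_pow]
    exact sub_lt_self _ (by positivity)

theorem spectrum_subset_of_norm_aeval_le [NormedRing A] [NormedAlgebra 𝕜 A] [CompleteSpace A]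
    {T : E →L[𝕜] E} (hT : IsSelfAdjoint T) {S : A}
    (hST : ∀ P : 𝕜[X], ‖aeval S P‖ ≤ ‖aeval T P‖) : spectrum 𝕜 S ⊆ spectrum 𝕜 T := by
  refine fun z hS hT_unit ↦ hS ?_
  set U : E →L[𝕜] E := algebraMap 𝕜 _ z - T with hU
  have hU_star : star U = algebraMap 𝕜 _ (star z) - T := by
    rw [hU, star_sub, hT.star_eq, algebraMap_star_comm]
  obtain ⟨ε, hε, hε_norm⟩ := exists_norm_one_sub_smul_star_mul_self_lt_one hT_unit
  set P : 𝕜[X] := 1 - C (ε : 𝕜) * ((C (star z) - X) * (C z - X)) with hP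
  have hPT : aeval T P = 1 - (ε : 𝕜) • (star U * U) := by
    rw [hU_star]
    simp [hP, hU, Algebra.smul_def]
  have hPS : 1 - aeval S P
      = (ε : 𝕜) • ((algebraMap 𝕜 A (star z) - S) * (algebraMap 𝕜 A z - S)) := by
    simp [hP, Algebra.smul_def]
  have h_unit : IsUnit (1 - aeval S P) :=
    isUnit_one_sub_of_norm_lt_one ((hST P).trans_lt (hPT ▸ hε_norm))
  have h_comm : Commute (algebraMap 𝕜 A (star z) - S) (algebraMap 𝕜 A z - S) :=
    ((Algebra.commute_algebraMap_left _ _).sub_left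
      ((Algebra.commute_algebraMap_right _ _).sub_right (Commute.refl S)))
  have hε_ne : (ε : 𝕜) ≠ 0 := RCLike.ofReal_ne_zero.2 hε.ne'
  rw [hPS, ← Units.smul_mk0 hε_ne, isUnit_smul_iff, h_comm.isUnit_mul_iff] at h_unit
  exact h_unit.2

end Spectrum

section SequenceSpace

variable {α β ι E : Type*} [NormedAddCommGroup E] {p : ℝ≥0∞}

/-- The truncation of an `ℓ^p` function to a set: `f` on `s`, zero elsewhere. -/
noncomputable def lpIndicator (s : Set α) (f : ℓ^p(α, E)) : ℓ^p(α, E) :=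
  ⟨s.indicator f, (lp.memℓp f).mono' fun a ↦ norm_indicator_le_norm_self f a⟩

theorem coeFn_lpIndicator (s : Set α) (f : ℓ^p(α, E)) : ⇑(lpIndicator s f) = s.indicator f := rfl

theorem hasSum_norm_rpow_subtype (hp : 0 < p.toReal) {s : Set α} {f : ℓ^p(α, E)}
    (hf : ∀ a ∉ s, f a = 0) : HasSum (fun a : s ↦ ‖f a‖ ^ p.toReal) (‖f‖ ^ p.toReal) := by
  refine (hasSum_subtype_iff_of_support_subset ?_).2 (lp.hasSum_norm hp f)
  refine Function.support_subset_iff'.2 fun a ha ↦ ?_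
  rw [hf a ha, norm_zero, Real.zero_rpow hp.ne']

theorem hasSum_norm_rpow_lpIndicator_fiber (hp : 0 < p.toReal) (π : α → ι) (f : ℓ^p(α, E)) :
    HasSum (fun i ↦ ‖lpIndicator (π ⁻¹' {i}) f‖ ^ p.toReal) (‖f‖ ^ p.toReal) := by
  have h_fiber (i : ι) : ‖lpIndicator (π ⁻¹' {i}) f‖ ^ p.toReal
      = ∑' a : π ⁻¹' {i}, ‖f a‖ ^ p.toReal := by
    have h_norm := hasSum_norm_rpow_subtype hp (f := lpIndicator (π ⁻¹' {i}) f)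
      fun a ha ↦ indicator_of_notMem ha f
    rw [← h_norm.tsum_eq]
    exact tsum_congr fun a ↦ by rw [coeFn_lpIndicator, indicator_of_mem a.2]
  simp only [h_fiber]
  exact (lp.hasSum_norm hp f).tsum_fiberwise π

theorem lp_norm_le_of_eqOn_comp (hp : 0 < p.toReal) {φ : α → β} {s : Set α} (hφ : InjOn φ s)
    {f : ℓ^p(α, E)} {g : ℓ^p(β, E)} (hf : ∀ a ∉ s, f a = 0) (hfg : EqOn (g ∘ φ) f s) :
    ‖f‖ ≤ ‖g‖ := by
  refine (Real.rpow_le_rpow_iff (lp.norm_nonneg' f) (lp.norm_nonneg' g) hp).1 ?_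
  have h_nonneg (b : β) (_ : b ∉ range (s.domRestrict φ)) : 0 ≤ ‖g b‖ ^ p.toReal := by
    positivity
  have h_term (a : s) : ‖f a‖ ^ p.toReal ≤ ‖g (s.domRestrict φ a)‖ ^ p.toReal := by
    rw [← hfg a.2, Function.comp_apply, domRestrict_apply]
  exact hasSum_le_inj (s.domRestrict φ) (injOn_iff_injective.1 hφ)
    h_nonneg h_term (hasSum_norm_rpow_subtype hp hf) (lp.hasSum_norm hp g)

theorem exists_lp_norm_eq_eqOn_comp (hp : 0 < p.toReal) {φ : α → β} {s : Set α} (hφ : InjOn φ s)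
    {f : ℓ^p(α, E)} (hf : ∀ a ∉ s, f a = 0) :
    ∃ g : ℓ^p(β, E), ‖g‖ = ‖f‖ ∧ EqOn (g ∘ φ) f s := by
  have h_inj : Function.Injective (s.domRestrict φ) := injOn_iff_injective.1 hφ
  obtain ⟨g, hgφ, hg_zero⟩ : ∃ g : β → E, (∀ a : s, g (φ a) = f a) ∧
      ∀ b ∉ range (s.domRestrict φ), g b = 0 :=
    ⟨Function.extend (s.domRestrict φ) (s.domRestrict f) 0, h_inj.extend_apply _ _,
      fun b hb ↦ Function.extend_apply' _ _ _ hb⟩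
  have hg_sum : HasSum (fun b ↦ ‖g b‖ ^ p.toReal) (‖f‖ ^ p.toReal) := by
    refine (h_inj.hasSum_iff fun b hb ↦ ?_).1 ?_
    · rw [hg_zero b hb, norm_zero, Real.zero_rpow hp.ne']
    · simpa only [Function.comp_def, domRestrict_apply, hgφ] using hasSum_norm_rpow_subtype hp hf
  let g' : ℓ^p(β, E) := ⟨g, memℓp_gen hg_sum.summable⟩
  refine ⟨g', ?_, fun a ha ↦ hgφ ⟨a, ha⟩⟩
  exact (Real.rpow_left_inj (lp.norm_nonneg' g') (lp.norm_nonneg' f) hp.ne').1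
    ((lp.hasSum_norm hp g').unique hg_sum)

end SequenceSpace

section Ball

variable {V W : Type*} {G : SimpleGraph V} {H : SimpleGraph W} {x u v : V} {y : W} {m n r : ℕ}

theorem mem_gball_iff_edist_le : v ∈ gball G x r ↔ G.edist x v ≤ r := by
  refine ⟨fun ⟨h, hr⟩ ↦ ?_, fun h ↦ ?_⟩
  · rw [← h.coe_dist_eq_edist]
    exact_mod_cast hr
  · have h_reach : G.Reachable x v :=
      SimpleGraph.reachable_of_edist_ne_top (h.trans_lt (ENat.natCast_lt_top r)).ne
    rw [← h_reach.coe_dist_eq_edist] at h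
    exact ⟨h_reach, by exact_mod_cast h⟩

theorem self_mem_gball : x ∈ gball G x r :=
  mem_gball_iff_edist_le.2 (by simp)

theorem gball_mono (h : m ≤ n) : gball G x m ⊆ gball G x n := fun _ hv ↦ ⟨hv.1, hv.2.trans h⟩

theorem mem_gball_comm : v ∈ gball G u r ↔ u ∈ gball G v r := by
  simp only [mem_gball_iff_edist_le, SimpleGraph.edist_comm]

theorem mem_gball_add (hu : u ∈ gball G x m) (hv : v ∈ gball G u n) : v ∈ gball G x (m + n) := by
  rw [mem_gball_iff_edist_le] at *
  exact_mod_cast SimpleGraph.edist_triangle.trans (add_le_add hu hv)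

theorem mem_gball_one_of_adj (h : G.Adj u v) : v ∈ gball G u 1 :=
  mem_gball_iff_edist_le.2 (by simp [SimpleGraph.edist_eq_one_iff_adj.2 h])

theorem eq_or_exists_adj_of_mem_gball_succ (hv : v ∈ gball G x (n + 1)) :
    v = x ∨ ∃ u ∈ gball G x n, G.Adj u v := by
  obtain ⟨w, hw⟩ := hv.1.symm.exists_walk_length_eq_dist
  cases w with
  | nil => exact .inl rfl
  | @cons _ u _ h w =>
    refine .inr ⟨u, ⟨w.reachable.symm, ?_⟩, h.symm⟩
    have h_len : w.length + 1 ≤ n + 1 := by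
      rw [← SimpleGraph.Walk.length_cons h, hw, SimpleGraph.dist_comm]
      exact hv.2
    rw [SimpleGraph.dist_comm]
    exact (SimpleGraph.dist_le w).trans (Nat.le_of_succ_le_succ h_len)

theorem BallIso.symm (h : BallIso G H x y r) : BallIso H G y x r := by
  obtain ⟨e, h_root, h_adj⟩ := h
  refine ⟨e.symm, fun hy hx ↦ ?_, fun a b ↦ ?_⟩
  · rw [Equiv.symm_apply_eq, h_root hx hy]
  · rw [h_adj, e.apply_symm_apply, e.apply_symm_apply]

/-- `φ` restricts to an isomorphism of rooted balls `B_r(G,x) → B_r(H,y)`. Compared with `BallIso`,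
the isomorphism is a function on all vertices, whose values outside the ball carry no meaning. -/
structure IsBallIso (G : SimpleGraph V) (H : SimpleGraph W) (x : V) (y : W) (r : ℕ)
    (φ : V → W) : Prop where
  map_root : φ x = y
  bijOn : BijOn φ (gball G x r) (gball H y r)
  adj_iff : ∀ a ∈ gball G x r, ∀ b ∈ gball G x r, G.Adj a b ↔ H.Adj (φ a) (φ b)

theorem BallIso.exists_isBallIso (h : BallIso G H x y r) : ∃ φ, IsBallIso G H x y r φ := by
  classical
  obtain ⟨e, h_root, h_adj⟩ := h
  let φ : V → W := fun v ↦ if hv : v ∈ gball G x r then e ⟨v, hv⟩ else y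
  have hφ : ∀ a : gball G x r, φ a = e a := fun a ↦ dif_pos a.2
  refine ⟨φ, ?_, ⟨fun a ha ↦ ?_, fun a ha b hb hab ↦ ?_, fun w hw ↦ ?_⟩, fun a ha b hb ↦ ?_⟩
  · rw [hφ ⟨x, self_mem_gball⟩, h_root _ self_mem_gball]
  · rw [hφ ⟨a, ha⟩]
    exact (e ⟨a, ha⟩).2
  · rw [hφ ⟨a, ha⟩, hφ ⟨b, hb⟩] at hab
    exact congrArg Subtype.val (e.injective (Subtype.ext hab))
  · exact ⟨e.symm ⟨w, hw⟩, (e.symm ⟨w, hw⟩).2, by rw [hφ, e.apply_symm_apply]⟩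
  · rw [hφ ⟨a, ha⟩, hφ ⟨b, hb⟩]
    exact h_adj ⟨a, ha⟩ ⟨b, hb⟩

namespace IsBallIso

variable {φ : V → W}

theorem mapsTo_gball (hφ : IsBallIso G H x y r φ) (hn : n ≤ r) :
    MapsTo φ (gball G x n) (gball H y n) := by
  induction n with
  | zero =>
    intro v hv
    obtain rfl := hv.1.dist_eq_zero_iff.1 (Nat.le_zero.1 hv.2)
    exact hφ.map_root ▸ self_mem_gball
  | succ n ih =>
    intro v hv
    rcases eq_or_exists_adj_of_mem_gball_succ hv with rfl | ⟨u, hu, huv⟩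
    · exact hφ.map_root ▸ self_mem_gball
    · have h_adj : H.Adj (φ u) (φ v) :=
        (hφ.adj_iff u (gball_mono (by lia) hu) v (gball_mono hn hv)).1 huv
      exact mem_gball_add (ih (by lia) hu) (mem_gball_one_of_adj h_adj)

theorem bijOn_neighborSet (hφ : IsBallIso G H x y r φ) (hn : n + 1 ≤ r) (hv : v ∈ gball G x n) :
    BijOn φ (G.neighborSet v) (H.neighborSet (φ v)) := by
  have hv_r : v ∈ gball G x r := gball_mono (by lia) hv
  have h_nbr : ∀ u ∈ G.neighborSet v, u ∈ gball G x r := fun u hu ↦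
    gball_mono hn (mem_gball_add hv (mem_gball_one_of_adj hu))
  refine ⟨fun u hu ↦ (hφ.adj_iff v hv_r u (h_nbr u hu)).1 hu, hφ.bijOn.injOn.mono h_nbr,
    fun w hw ↦ ?_⟩
  have hw_r : w ∈ gball H y r :=
    gball_mono hn (mem_gball_add (hφ.mapsTo_gball (by lia) hv) (mem_gball_one_of_adj hw))
  obtain ⟨u, hu, rfl⟩ := hφ.bijOn.surjOn hw_r
  exact ⟨u, (hφ.adj_iff v hv_r u hu).2 hw, rfl⟩

end IsBallIso

end Ball

theorem sum_neighborFinset_eq_of_bijOn {V W M : Type*} [AddCommMonoid M] {G : SimpleGraph V}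
    {H : SimpleGraph W} [G.LocallyFinite] [H.LocallyFinite] {φ : V → W} {v : V}
    (hφ : BijOn φ (G.neighborSet v) (H.neighborSet (φ v))) {f : V → M} {g : W → M}
    (hfg : EqOn (g ∘ φ) f (G.neighborSet v)) :
    ∑ w ∈ H.neighborFinset (φ v), g w = ∑ u ∈ G.neighborFinset v, f u := by
  rw [← SimpleGraph.coe_neighborFinset, ← SimpleGraph.coe_neighborFinset] at hφ
  rw [← SimpleGraph.coe_neighborFinset] at hfg
  exact (Finset.sum_nbij φ hφ.mapsTo hφ.injOn hφ.surjOn fun u hu ↦ (hfg hu).symm).symm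

theorem degree_eq_of_bijOn {V W : Type*} {G : SimpleGraph V}
    {H : SimpleGraph W} [G.LocallyFinite] [H.LocallyFinite] {φ : V → W} {v : V}
    (hφ : BijOn φ (G.neighborSet v) (H.neighborSet (φ v))) : H.degree (φ v) = G.degree v := by
  rw [← SimpleGraph.card_neighborFinset_eq_degree, ← SimpleGraph.card_neighborFinset_eq_degree,
    Finset.card_eq_sum_ones, Finset.card_eq_sum_ones]
  exact sum_neighborFinset_eq_of_bijOn hφ fun _ _ ↦ rfl

section Laplacian

variable {𝕜 V W : Type*} [NontriviallyNormedField 𝕜] {p : ℝ≥0∞} [Fact (1 ≤ p)]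
  {G : SimpleGraph V} {H : SimpleGraph W} [G.LocallyFinite] [H.LocallyFinite]

/-- The bounded operator `L` on `ℓ^p(V)` is the graph Laplacian of `G`. This is a predicate rather
than a construction because such an `L` need not exist when the vertex degrees are unbounded. -/
def IsLaplacian (G : SimpleGraph V) [G.LocallyFinite] (L : ℓ^p(V, 𝕜) →L[𝕜] ℓ^p(V, 𝕜)) : Prop :=
  ∀ (f : ℓ^p(V, 𝕜)) (x : V), L f x = (G.degree x : 𝕜) * f x - ∑ y ∈ G.neighborFinset x, f y

theorem lp_aeval_apply (L : ℓ^p(V, 𝕜) →L[𝕜] ℓ^p(V, 𝕜)) (P : 𝕜[X]) (f : ℓ^p(V, 𝕜)) (v : V) :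
    aeval L P f v = ∑ k ∈ Finset.range (P.natDegree + 1), P.coeff k * (L ^ k) f v := by
  rw [Polynomial.aeval_eq_sum_range, sum_apply, lp.coeFn_sum, Finset.sum_apply]
  rfl

namespace IsLaplacian

variable {LG : ℓ^p(V, 𝕜) →L[𝕜] ℓ^p(V, 𝕜)} {LH : ℓ^p(W, 𝕜) →L[𝕜] ℓ^p(W, 𝕜)}
  {φ : V → W} {f : ℓ^p(V, 𝕜)} {g : ℓ^p(W, 𝕜)} {v : V}

theorem pow_apply_comp (hLG : IsLaplacian G LG) (hLH : IsLaplacian H LH) {k : ℕ}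
    (hφ : ∀ u ∈ gball G v k, BijOn φ (G.neighborSet u) (H.neighborSet (φ u)))
    (hfg : EqOn (g ∘ φ) f (gball G v k)) : (LH ^ k) g (φ v) = (LG ^ k) f v := by
  induction k generalizing v with
  | zero => exact hfg self_mem_gball
  | succ k ih =>
    have ih_of_subset {u : V} (hu : gball G u k ⊆ gball G v (k + 1)) :
        (LH ^ k) g (φ u) = (LG ^ k) f u := ih (fun a ha ↦ hφ a (hu ha)) (hfg.mono hu)
    have h_nbr : EqOn ((LH ^ k) g ∘ φ) ((LG ^ k) f) (G.neighborSet v) := fun u hu ↦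
      ih_of_subset fun a ha ↦ add_comm 1 k ▸ mem_gball_add (mem_gball_one_of_adj hu) ha
    have hφv := hφ v self_mem_gball
    rw [pow_succ', pow_succ', mul_apply_eq_comp, mul_apply_eq_comp, hLG,
      hLH, ih_of_subset (gball_mono k.le_succ), degree_eq_of_bijOn hφv,
      sum_neighborFinset_eq_of_bijOn hφv h_nbr]

theorem aeval_apply_comp (hLG : IsLaplacian G LG) (hLH : IsLaplacian H LH) {P : 𝕜[X]}
    (hφ : ∀ u ∈ gball G v P.natDegree, BijOn φ (G.neighborSet u) (H.neighborSet (φ u)))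
    (hfg : EqOn (g ∘ φ) f (gball G v P.natDegree)) : aeval LH P g (φ v) = aeval LG P f v := by
  rw [lp_aeval_apply, lp_aeval_apply]
  refine Finset.sum_congr rfl fun k hk ↦ ?_
  have hk_ball : gball G v k ⊆ gball G v P.natDegree := gball_mono (Finset.mem_range_succ_iff.1 hk)
  rw [pow_apply_comp hLG hLH (fun u hu ↦ hφ u (hk_ball hu)) (hfg.mono hk_ball)]

theorem aeval_apply_congr (hLG : IsLaplacian G LG) {P : 𝕜[X]} {f' : ℓ^p(V, 𝕜)}
    (hff' : EqOn f' f (gball G v P.natDegree)) : aeval LG P f' v = aeval LG P f v :=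
  aeval_apply_comp hLG hLG (φ := id) (fun _ _ ↦ bijOn_id _) hff'

theorem aeval_apply_eq_zero (hLG : IsLaplacian G LG) {P : 𝕜[X]}
    (hf : ∀ u ∈ gball G v P.natDegree, f u = 0) : aeval LG P f v = 0 := by
  rw [aeval_apply_congr hLG (f := 0) (fun u hu ↦ hf u hu), map_zero, lp.coeFn_zero, Pi.zero_apply]

theorem aeval_lpIndicator_component (hLG : IsLaplacian G LG) (P : 𝕜[X]) (f : ℓ^p(V, 𝕜))
    (c : G.ConnectedComponent) :
    aeval LG P (lpIndicator (G.connectedComponentMk ⁻¹' {c}) f)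
      = lpIndicator (G.connectedComponentMk ⁻¹' {c}) (aeval LG P f) := by
  set S : Set V := G.connectedComponentMk ⁻¹' {c}
  have hS {u v : V} {n : ℕ} (hu : u ∈ gball G v n) : u ∈ S ↔ v ∈ S := by
    simp only [S, mem_preimage, SimpleGraph.ConnectedComponent.sound hu.1]
  ext v
  by_cases hv : v ∈ S
  · rw [coeFn_lpIndicator, indicator_of_mem hv]
    exact aeval_apply_congr hLG fun u hu ↦ indicator_of_mem ((hS hu).2 hv) _
  · rw [coeFn_lpIndicator, indicator_of_notMem hv]
    exact aeval_apply_eq_zero hLG fun u hu ↦ indicator_of_notMem (mt (hS hu).1 hv) _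

theorem norm_aeval_apply_le_of_ball (hLG : IsLaplacian G LG) (hLH : IsLaplacian H LH) (hp : p ≠ ∞)
    (hGH : ∀ (x : V) (r : ℕ), ∃ y : W, BallIso G H x y r) (P : 𝕜[X]) {x : V} {n : ℕ}
    (hf : ∀ v ∉ gball G x n, f v = 0) : ‖aeval LG P f‖ ≤ ‖aeval LH P‖ * ‖f‖ := by
  have hp_pos : 0 < p.toReal := ENNReal.toReal_pos (zero_lt_one.trans_le Fact.out).ne' hp
  set d := P.natDegree
  obtain ⟨y, hy⟩ := hGH x (n + d + d + 1)
  obtain ⟨φ, hφ⟩ := hy.exists_isBallIso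
  obtain ⟨g, hg_norm, hfg⟩ := exists_lp_norm_eq_eqOn_comp hp_pos hφ.bijOn.injOn
    fun v hv ↦ hf v (mt (gball_mono (by lia) ·) hv)
  have h_support : ∀ v ∉ gball G x (n + d), aeval LG P f v = 0 := fun v hv ↦
    aeval_apply_eq_zero hLG fun u hu ↦ hf u fun hux ↦
      hv (mem_gball_add hux (mem_gball_comm.1 hu))
  have h_agree : EqOn (aeval LH P g ∘ φ) (aeval LG P f) (gball G x (n + d)) := fun v hv ↦
    aeval_apply_comp hLG hLH
      (fun u hu ↦ hφ.bijOn_neighborSet le_rfl (mem_gball_add hv hu))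
      (fun u hu ↦ hfg (gball_mono (Nat.le_succ _) (mem_gball_add hv hu)))
  calc ‖aeval LG P f‖ ≤ ‖aeval LH P g‖ :=
        lp_norm_le_of_eqOn_comp hp_pos (hφ.bijOn.injOn.mono (gball_mono (by lia))) h_support h_agree
    _ ≤ ‖aeval LH P‖ * ‖g‖ := ContinuousLinearMap.le_opNorm _ _
    _ = ‖aeval LH P‖ * ‖f‖ := by rw [hg_norm]

theorem norm_aeval_apply_le_of_component (hLG : IsLaplacian G LG) (hLH : IsLaplacian H LH)
    (hp : p ≠ ∞) (hGH : ∀ (x : V) (r : ℕ), ∃ y : W, BallIso G H x y r) (P : 𝕜[X])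
    {c : G.ConnectedComponent} (hf : ∀ v, G.connectedComponentMk v ≠ c → f v = 0) :
    ‖aeval LG P f‖ ≤ ‖aeval LH P‖ * ‖f‖ := by
  classical
  obtain ⟨x, rfl⟩ := c.exists_rep
  have h_lim : HasSum (fun v ↦ lp.single p v (f v)) f := lp.hasSum_single hp f
  refine le_of_tendsto_of_tendsto' (((aeval LG P).continuous.tendsto f).comp h_lim).norm
    (h_lim.norm.const_mul _) fun s ↦ ?_
  refine norm_aeval_apply_le_of_ball hLG hLH hp hGH P (x := x) (n := s.sup (G.dist x))
    fun v hv ↦ ?_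
  rw [lp.coeFn_sum, Finset.sum_apply]
  refine Finset.sum_eq_zero fun u hu ↦ ?_
  by_cases huv : v = u
  · subst huv
    rw [lp.single_apply_self]
    refine hf v fun hvx ↦ hv ⟨(SimpleGraph.ConnectedComponent.exact hvx).symm, ?_⟩
    exact Finset.le_sup (f := G.dist x) hu
  · exact lp.single_apply_ne _ _ _ huv

theorem norm_aeval_le (hLG : IsLaplacian G LG) (hLH : IsLaplacian H LH) (hp : p ≠ ∞)
    (hGH : ∀ (x : V) (r : ℕ), ∃ y : W, BallIso G H x y r) (P : 𝕜[X]) :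
    ‖aeval LG P‖ ≤ ‖aeval LH P‖ := by
  have hp_pos : 0 < p.toReal := ENNReal.toReal_pos (zero_lt_one.trans_le Fact.out).ne' hp
  refine ContinuousLinearMap.opNorm_le_bound _ (norm_nonneg _) fun f ↦ ?_
  refine (Real.rpow_le_rpow_iff (norm_nonneg _) (by positivity) hp_pos).1 ?_
  rw [Real.mul_rpow (norm_nonneg _) (norm_nonneg _)]
  refine hasSum_le (fun c ↦ ?_)
    (hasSum_norm_rpow_lpIndicator_fiber hp_pos G.connectedComponentMk (aeval LG P f))
    ((hasSum_norm_rpow_lpIndicator_fiber hp_pos G.connectedComponentMk f).mul_left _)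
  rw [← aeval_lpIndicator_component hLG, ← Real.mul_rpow (norm_nonneg _) (norm_nonneg _)]
  gcongr
  exact norm_aeval_apply_le_of_component hLG hLH hp hGH P
    fun v hv ↦ indicator_of_notMem (s := G.connectedComponentMk ⁻¹' {c}) hv f

theorem norm_aeval_eq (hLG : IsLaplacian G LG) (hLH : IsLaplacian H LH) (hp : p ≠ ∞)
    (hGH : GraphEquiv G H) (P : 𝕜[X]) : ‖aeval LG P‖ = ‖aeval LH P‖ :=
  (norm_aeval_le hLG hLH hp hGH.1 P).antisymm
    (norm_aeval_le hLH hLG hp (fun y r ↦ (hGH.2 y r).imp fun _ ↦ BallIso.symm) P)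

theorem apply_single [DecidableEq V] (hLG : IsLaplacian G LG) (v : V) :
    LG (lp.single p v 1)
      = (G.degree v : 𝕜) • lp.single p v 1 - ∑ u ∈ G.neighborFinset v, lp.single p u 1 := by
  ext w
  rw [hLG]
  simp only [lp.coeFn_sub, lp.coeFn_smul, lp.coeFn_sum, Pi.sub_apply, Pi.smul_apply,
    Finset.sum_apply, lp.coeFn_single, smul_eq_mul, Pi.single_apply]
  congr 1
  · by_cases h : w = v
    · rw [h]
    · simp only [if_neg h, mul_zero]
  · rw [Finset.sum_ite_eq', Finset.sum_ite_eq]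
    exact if_congr (by rw [G.mem_neighborFinset, G.mem_neighborFinset, G.adj_comm]) rfl rfl

theorem isSelfAdjoint {𝕜 : Type*} [RCLike 𝕜] {L : ℓ²(V, 𝕜) →L[𝕜] ℓ²(V, 𝕜)}
    (hL : IsLaplacian G L) : IsSelfAdjoint L := by
  classical
  have h_coord (h : ℓ²(V, 𝕜)) (v : V) : inner 𝕜 (lp.single 2 v (1 : 𝕜)) h = h v := by
    simp [lp.inner_single_left]
  refine ContinuousLinearMap.ext fun f ↦ lp.ext (funext fun v ↦ ?_)
  calc (star L f) v = inner 𝕜 (L (lp.single 2 v 1)) f := by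
        rw [← h_coord, ContinuousLinearMap.star_eq_adjoint, ContinuousLinearMap.adjoint_inner_right]
    _ = (G.degree v : 𝕜) * f v - ∑ u ∈ G.neighborFinset v, f u := by
        rw [hL.apply_single, inner_sub_left, inner_smul_left, sum_inner, map_natCast]
        simp only [h_coord]
    _ = L f v := (hL f v).symm

end IsLaplacian

end Laplacian

theorem stmt10_general {𝕜 V W : Type*} [RCLike 𝕜] {G : SimpleGraph V} {H : SimpleGraph W}
    [G.LocallyFinite] [H.LocallyFinite] (hGH : GraphEquiv G H)
    {LG : ℓ²(V, 𝕜) →L[𝕜] ℓ²(V, 𝕜)} {LH : ℓ²(W, 𝕜) →L[𝕜] ℓ²(W, 𝕜)}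
    (hLG : IsLaplacian G LG) (hLH : IsLaplacian H LH) :
    (∀ P : 𝕜[X], ‖aeval LG P‖ = ‖aeval LH P‖) ∧ spectrum 𝕜 LG = spectrum 𝕜 LH := by
  have h_norm := hLG.norm_aeval_eq hLH ENNReal.ofNat_ne_top hGH
  refine ⟨h_norm, Subset.antisymm ?_ ?_⟩
  · exact spectrum_subset_of_norm_aeval_le hLH.isSelfAdjoint fun P ↦ (h_norm P).le
  · exact spectrum_subset_of_norm_aeval_le hLG.isSelfAdjoint fun P ↦ (h_norm P).ge

/-- If two bounded-degree countable graphs are equivalent, then for every real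
polynomial `P` the operator norms of `P` applied to their ℓ²-Laplacians agree, and
consequently the two Laplacians have the same spectrum. -/
theorem stmt10 {V W : Type} (G : SimpleGraph V) (H : SimpleGraph W)
    [G.LocallyFinite] [H.LocallyFinite] (d : ℕ)
    (hdG : ∀ x : V, G.degree x ≤ d) (hdH : ∀ y : W, H.degree y ≤ d)
    (heq : GraphEquiv G H)
    (LG : lp (fun _ : V => ℝ) 2 →L[ℝ] lp (fun _ : V => ℝ) 2)
    (LH : lp (fun _ : W => ℝ) 2 →L[ℝ] lp (fun _ : W => ℝ) 2)
    (hLG : ∀ (f : lp (fun _ : V => ℝ) 2) (x : V),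
      (LG f : ∀ _ : V, ℝ) x
        = (G.degree x : ℝ) * (f : ∀ _ : V, ℝ) x - ∑ y ∈ G.neighborFinset x, (f : ∀ _ : V, ℝ) y)
    (hLH : ∀ (f : lp (fun _ : W => ℝ) 2) (y : W),
      (LH f : ∀ _ : W, ℝ) y
        = (H.degree y : ℝ) * (f : ∀ _ : W, ℝ) y - ∑ z ∈ H.neighborFinset y, (f : ∀ _ : W, ℝ) z) :
    (∀ P : Polynomial ℝ, ‖Polynomial.aeval LG P‖ = ‖Polynomial.aeval LH P‖) ∧
    spectrum ℝ LG = spectrum ℝ LH :=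
  stmt10_general heq hLG hLH
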